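/- arXiv:2009.07073 — 5 statements merged into one kernel-verified Lean document; each statement's English description precedes it below -/
import Mathlib

section
/- Let G be a finite simple graph and B a set of vertices of G with forcing processes F and F'. Then for any set B' obtained from B using F, the set of forces (F \ F(B')) ∪ F'(B') is a forcing process of B in G, where for S ⊆ V(G), F(S) = {x→y ∈ F : y ∉ S}. -/
/-!
Zero forcing with leaks (vertex leaks, edge leaks, specified leaks, mixed leaks).

A force `u → v` is modelled as the ordered pair `(u, v) : V × V`.  All the
leak notions are encoded by a set `P` of *prohibited* forces.
-/

variable {V : Type*}

/-- With blue set `S` and prohibited set of forces `P`, vertex `u` can force `v`: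
`u` is blue, `v` is a white neighbor of `u`, every other neighbor of `u` is blue,
and the force `u → v` is not prohibited. -/
def CanForce (G : SimpleGraph V) (P : Set (V × V)) (S : Set V) (u v : V) : Prop :=
  u ∈ S ∧ v ∉ S ∧ G.Adj u v ∧ (∀ w, G.Adj u w → w ≠ v → w ∈ S) ∧ (u, v) ∉ P

/-- `Forced G P B v` means vertex `v` is eventually colored blue when the zero
forcing color change rule (avoiding the prohibited forces `P`) is applied
exhaustively starting from the blue set `B`. -/
inductive Forced (G : SimpleGraph V) (P : Set (V × V)) (B : Set V) : V → Prop
  | init : ∀ {v : V}, v ∈ B → Forced G P B v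
  | force : ∀ {u v : V}, G.Adj u v → (u, v) ∉ P → Forced G P B u →
      (∀ w, G.Adj u w → w ≠ v → Forced G P B w) → Forced G P B v

/-- `B^[∞]_P`, the set of blue vertices after exhaustively applying the zero
forcing rule with prohibited forces `P`, starting from `B`. -/
def closureSet (G : SimpleGraph V) (P : Set (V × V)) (B : Set V) : Set V :=
  {v | Forced G P B v}

/-- The prohibited forces corresponding to a set `L` of vertex leaks: a vertex
leak may not perform any force. -/
def vertexLeaks (L : Set V) : Set (V × V) := {p | p.1 ∈ L}

/-- The prohibited forces corresponding to a set `L` of edge leaks: no force may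
pass across an edge leak in either direction. -/
def edgeLeaksP (L : Set (Sym2 V)) : Set (V × V) := {p | s(p.1, p.2) ∈ L}

/-- `B` is an `ℓ`-leaky forcing set of `G`: despite any set of (at most) `ℓ`
vertex leaks, exhaustive forcing colors all of `V(G)` blue. -/
def IsLeakyForcingSet (G : SimpleGraph V) (ℓ : ℕ) (B : Set V) : Prop :=
  ∀ L : Finset V, L.card ≤ ℓ → closureSet G (vertexLeaks ↑L) B = Set.univ

/-- `B` is an `ℓ`-edge-leaky forcing set of `G`: despite any set of (at most)
`ℓ` edge leaks, exhaustive forcing colors all of `V(G)` blue. -/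
def IsEdgeLeakyForcingSet (G : SimpleGraph V) (ℓ : ℕ) (B : Set V) : Prop :=
  ∀ L : Finset (Sym2 V), ↑L ⊆ G.edgeSet → L.card ≤ ℓ →
    closureSet G (edgeLeaksP ↑L) B = Set.univ

/-- `B` is a specified `ℓ`-leaky forcing set of `G`: despite any set of (at
most) `ℓ` specified leaks (prohibited forces between adjacent vertices),
exhaustive forcing colors all of `V(G)` blue. -/
def IsSpecifiedLeakyForcingSet (G : SimpleGraph V) (ℓ : ℕ) (B : Set V) : Prop :=
  ∀ L : Finset (V × V), (∀ p ∈ L, G.Adj p.1 p.2) → L.card ≤ ℓ →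
    closureSet G (↑L) B = Set.univ

/-- `B` is a mixed `ℓ`-leaky forcing set of `G`: despite any set of (at most)
`ℓ` leaks, each a vertex leak, an edge leak, or a specified leak, exhaustive
forcing colors all of `V(G)` blue. -/
def IsMixedLeakyForcingSet (G : SimpleGraph V) (ℓ : ℕ) (B : Set V) : Prop :=
  ∀ (L₁ : Finset V) (L₂ : Finset (Sym2 V)) (L₃ : Finset (V × V)),
    ↑L₂ ⊆ G.edgeSet → (∀ p ∈ L₃, G.Adj p.1 p.2) →
    L₁.card + L₂.card + L₃.card ≤ ℓ →
    closureSet G (vertexLeaks ↑L₁ ∪ edgeLeaksP ↑L₂ ∪ (↑L₃ : Set (V × V))) B = Set.univ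

/-- A chronologically valid list of forces starting from a blue set. -/
def ValidList (G : SimpleGraph V) (P : Set (V × V)) : Set V → List (V × V) → Prop
  | _, [] => True
  | S, f :: l => CanForce G P S f.1 f.2 ∧ ValidList G P (insert f.2 S) l

/-- `F` is a forcing process (set of forces) of `B` in `G` with prohibited
forces `P`: the forces of `F` admit a chronological ordering in which each force
is valid and after applying all of them the whole graph is blue. -/
def IsForcingProcess (G : SimpleGraph V) (P : Set (V × V)) (B : Set V)
    (F : Set (V × V)) : Prop :=
  ∃ l : List (V × V), {f | f ∈ l} = F ∧ ValidList G P B l ∧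
    B ∪ Prod.snd '' F = Set.univ

/-- `B'` is obtained from `B` using `F`: `B` can color exactly `B'` blue using
only a subset of the forces in `F`, applied in a chronologically valid order. -/
def ObtainedUsing (G : SimpleGraph V) (P : Set (V × V)) (B : Set V) (F : Set (V × V))
    (B' : Set V) : Prop :=
  ∃ l : List (V × V), (∀ f ∈ l, f ∈ F) ∧ ValidList G P B l ∧
    B' = B ∪ Prod.snd '' {f | f ∈ l}

/-- `ℱ_P(B)`: the set of forces that belong to some forcing process of `B`
(with prohibited forces `P`). -/
def potentialForces (G : SimpleGraph V) (P : Set (V × V)) (B : Set V) : Set (V × V) :=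
  {f | ∃ F, IsForcingProcess G P B F ∧ f ∈ F}

/-- `Z_(ℓ)(G)`, the `ℓ`-leaky forcing number of `G`. -/
noncomputable def Zleaky (G : SimpleGraph V) (ℓ : ℕ) : ℕ :=
  sInf {n | ∃ B : Finset V, B.card = n ∧ IsLeakyForcingSet G ℓ ↑B}

/-- `Z'_(ℓ)(G)`, the `ℓ`-edge-leaky forcing number of `G`. -/
noncomputable def ZedgeLeaky (G : SimpleGraph V) (ℓ : ℕ) : ℕ :=
  sInf {n | ∃ B : Finset V, B.card = n ∧ IsEdgeLeakyForcingSet G ℓ ↑B}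

/-- `Z^s_(ℓ)(G)`, the specified `ℓ`-leaky forcing number of `G`. -/
noncomputable def Zspec (G : SimpleGraph V) (ℓ : ℕ) : ℕ :=
  sInf {n | ∃ B : Finset V, B.card = n ∧ IsSpecifiedLeakyForcingSet G ℓ ↑B}

/-- `Z^m_(ℓ)(G)`, the mixed `ℓ`-leaky forcing number of `G`. -/
noncomputable def Zmixed (G : SimpleGraph V) (ℓ : ℕ) : ℕ :=
  sInf {n | ∃ B : Finset V, B.card = n ∧ IsMixedLeakyForcingSet G ℓ ↑B}

/-- Two sets of specified leaks on `V(G)` are isomorphic if some bijection of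
the vertex set matches them up. -/
def LeaksIso (L₁ L₂ : Set (V × V)) : Prop :=
  ∃ φ : V ≃ V, ∀ x y : V, (x, y) ∈ L₁ ↔ (φ x, φ y) ∈ L₂

/-- `B` is an `L`-leaky forcing set of `G`: `B` colors all of `V(G)` blue
despite any set of specified leaks isomorphic to a subset of `L`. -/
def IsLLeakyForcingSet (G : SimpleGraph V) (L : Set (V × V)) (B : Set V) : Prop :=
  ∀ L' : Set (V × V), (∃ L₂ ⊆ L, LeaksIso L' L₂) → closureSet G L' B = Set.univ

/-- `L` is a set of independent leaks: `|T(L)| = |L|` and `T(L) ∩ H(L) = ∅`. -/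
def IsIndependentLeaks [DecidableEq V] (L : Finset (V × V)) : Prop :=
  (L.image Prod.fst).card = L.card ∧ Disjoint (L.image Prod.fst) (L.image Prod.snd)

/-- `I(L)`: the size of a largest set of independent leaks contained in `L`. -/
noncomputable def maxIndepLeaks [DecidableEq V] (L : Finset (V × V)) : ℕ :=
  sSup {n | ∃ M ⊆ L, IsIndependentLeaks M ∧ M.card = n}

/-- `Z_L(G)`, the `L`-leaky forcing number of `G`. -/
noncomputable def ZLleaky (G : SimpleGraph V) (L : Set (V × V)) : ℕ :=
  sInf {n | ∃ B : Finset V, B.card = n ∧ IsLLeakyForcingSet G L ↑B}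


/-!
First perform the forces of `F` that color `B'`, then those of `F'` in their own chronological
order, skipping every force whose head is already in `B'`. The second stage is valid because a force
survives enlarging the blue set as long as its head stays white. The first stage performs every
force of `F` with head in `B'`, because distinct forces of a forcing process have distinct heads,
all of them outside `B`.
-/

theorem CanForce.mono {G : SimpleGraph V} {P : Set (V × V)} {S T : Set V} {u v : V}
    (h : CanForce G P S u v) (hST : S ⊆ T) (hv : v ∉ T) : CanForce G P T u v := by
  obtain ⟨hu, -, huv, hnbr, hP⟩ := h
  exact ⟨hST hu, hv, huv, fun w hw hwv => hST (hnbr w hw hwv), hP⟩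

namespace ValidList

variable {G : SimpleGraph V} {P : Set (V × V)} {S : Set V} {l m : List (V × V)}

theorem snd_notMem (h : ValidList G P S l) {f : V × V} (hf : f ∈ l) : f.2 ∉ S := by
  induction l generalizing S with
  | nil => exact absurd hf List.not_mem_nil
  | cons a l ih =>
    obtain ⟨ha, hl⟩ := h
    rcases List.mem_cons.1 hf with rfl | hf
    · exact ha.2.1
    · exact fun hS => ih hl hf (Set.mem_insert_of_mem _ hS)

theorem injOn_snd (h : ValidList G P S l) : Set.InjOn Prod.snd {f | f ∈ l} := by
  induction l generalizing S with
  | nil => exact fun f hf => absurd hf List.not_mem_nil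
  | cons a l ih =>
    have snd_ne {f : V × V} (hf : f ∈ l) : f.2 ≠ a.2 := fun hfa =>
      h.2.snd_notMem hf (hfa ▸ Set.mem_insert _ _)
    intro f hf g hg hfg
    rcases List.mem_cons.1 hf with rfl | hfl <;> rcases List.mem_cons.1 hg with rfl | hgl
    · rfl
    · exact absurd hfg.symm (snd_ne hgl)
    · exact absurd hfg (snd_ne hfl)
    · exact ih h.2 hfl hgl hfg

theorem append (hl : ValidList G P S l) (hm : ValidList G P (S ∪ Prod.snd '' {f | f ∈ l}) m) :
    ValidList G P S (l ++ m) := by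
  induction l generalizing S with
  | nil => simpa using hm
  | cons a l ih =>
    have blue_cons : S ∪ Prod.snd '' {f | f ∈ a :: l} =
        insert a.2 S ∪ Prod.snd '' {f | f ∈ l} := by
      rw [List.setOfPred_mem_cons, Set.image_insert_eq, Set.union_insert, Set.insert_union]
    exact ⟨hl.1, ih hl.2 (blue_cons ▸ hm)⟩

theorem filter_snd_notMem (h : ValidList G P S l) (T : Set V) [DecidablePred (· ∈ T)] :
    ValidList G P (S ∪ T) (l.filter (·.2 ∉ T)) := by
  induction l generalizing S with
  | nil => trivial
  | cons a l ih =>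
    obtain ⟨ha, hl⟩ := h
    have htail : ValidList G P (insert a.2 (S ∪ T)) (l.filter (·.2 ∉ T)) :=
      Set.insert_union ▸ ih hl
    by_cases haT : a.2 ∈ T
    · rw [Set.insert_eq_of_mem (Set.mem_union_right S haT)] at htail
      rwa [List.filter_cons_of_neg (by simpa using haT)]
    · rw [List.filter_cons_of_pos (by simpa using haT)]
      exact ⟨ha.mono Set.subset_union_left fun h => h.elim ha.2.1 haT, htail⟩

theorem isForcingProcess_union {F : Set (V × V)} (hl : ValidList G P S l)
    (hF : IsForcingProcess G P (S ∪ Prod.snd '' {f | f ∈ l}) F) :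
    IsForcingProcess G P S ({f | f ∈ l} ∪ F) := by
  obtain ⟨m, rfl, hm, hcover⟩ := hF
  refine ⟨l ++ m, ?_, hl.append hm, ?_⟩
  · ext f
    exact List.mem_append
  · rwa [Set.image_union, ← Set.union_assoc]

end ValidList

section ForcingProcess

variable {G : SimpleGraph V} {P : Set (V × V)} {B B' : Set V} {F F' : Set (V × V)}

theorem IsForcingProcess.sep_snd_notMem (hF : IsForcingProcess G P B F) (hBB' : B ⊆ B') :
    IsForcingProcess G P B' {f ∈ F | f.2 ∉ B'} := by
  classical
  obtain ⟨l, rfl, hl, hcover⟩ := hF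
  refine ⟨l.filter (·.2 ∉ B'), ?_, ?_, Set.eq_univ_of_forall fun v => ?_⟩
  · ext f
    simp
  · simpa only [Set.union_eq_right.2 hBB'] using hl.filter_snd_notMem B'
  · by_cases hvB' : v ∈ B'
    · exact Or.inl hvB'
    · rcases hcover.symm ▸ Set.mem_univ v with hvB | ⟨f, hf, rfl⟩
      · exact absurd (hBB' hvB) hvB'
      · exact Or.inr ⟨f, ⟨hf, hvB'⟩, rfl⟩

theorem ObtainedUsing.exists_validList_eq_sep (hB' : ObtainedUsing G P B F B')
    (hF : IsForcingProcess G P B F) :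
    ∃ m : List (V × V), {f | f ∈ m} = {f ∈ F | f.2 ∈ B'} ∧ ValidList G P B m ∧
      B' = B ∪ Prod.snd '' {f | f ∈ m} := by
  obtain ⟨l, rfl, hl, -⟩ := hF
  obtain ⟨m, hml, hm, rfl⟩ := hB'
  refine ⟨m, Set.Subset.antisymm ?_ ?_, hm, rfl⟩
  · exact fun f hf => ⟨hml f hf, Or.inr ⟨f, hf, rfl⟩⟩
  · rintro f ⟨hf, hfB | ⟨g, hg, hgf⟩⟩
    · exact absurd hfB (hl.snd_notMem hf)
    · exact hl.injOn_snd (hml g hg) hf hgf ▸ hg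

end ForcingProcess

theorem statement0_general (G : SimpleGraph V) (P : Set (V × V))
    (B B' : Set V) (F F' : Set (V × V))
    (hF : IsForcingProcess G P B F) (hF' : IsForcingProcess G P B F')
    (hB' : ObtainedUsing G P B F B') :
    IsForcingProcess G P B
      ((F \ {f ∈ F | f.2 ∉ B'}) ∪ {f ∈ F' | f.2 ∉ B'}) := by
  obtain ⟨m, hm_eq, hm, hB'_eq⟩ := hB'.exists_validList_eq_sep hF
  have hBB' : B ⊆ B' := hB'_eq ▸ Set.subset_union_left
  have sdiff_eq : F \ {f ∈ F | f.2 ∉ B'} = {f | f ∈ m} := by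
    rw [hm_eq]
    ext f
    simp
  rw [sdiff_eq]
  exact hm.isForcingProcess_union (hB'_eq ▸ hF'.sep_snd_notMem hBB')

/-- Lemma `switch`: if `F` and `F'` are forcing processes of
`B` in `G` and `B'` is obtained from `B` using `F`, then
`(F \ F(B')) ∪ F'(B')` is a forcing process of `B`, where
`F(S) = {x→y ∈ F : y ∉ S}`. -/
theorem statement0 [Fintype V] [DecidableEq V] (G : SimpleGraph V)
    (B B' : Set V) (F F' : Set (V × V))
    (hF : IsForcingProcess G ∅ B F) (hF' : IsForcingProcess G ∅ B F')
    (hB' : ObtainedUsing G ∅ B F B') :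
    IsForcingProcess G ∅ B
      ((F \ {f ∈ F | f.2 ∉ B'}) ∪ {f ∈ F' | f.2 ∉ B'}) :=
  statement0_general G ∅ B B' F F' hF hF' hB'
end

section
/- Let G be a finite simple graph, ℓ ≥ 1, and let B be an (ℓ−1)-leaky forcing set of G. If L is a set of k ≥ ℓ vertex leaks, then |L \ B^[∞]_L| ≤ k − ℓ; that is, at most k − ℓ of the leaks remain white after exhaustively applying the zero forcing rule with leaks L starting from B. -/
/-!
Zero forcing with leaks (vertex leaks, edge leaks, specified leaks, mixed leaks).

A force `u → v` is modelled as the ordered pair `(u, v) : V × V`.  All the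
leak notions are encoded by a set `P` of *prohibited* forces.
-/

variable {V : Type*}

/-!
A white vertex never gets to perform a force, so of the leaks in `L` only those in `B^[∞]_L` matter:
leaking `L ∩ B^[∞]_L` alone already yields the closure `B^[∞]_L`. If at most `m` leaks turned blue,
an `m`-leaky forcing set would therefore colour the whole graph, so `L` has at most `m` elements.
-/

section

variable {G : SimpleGraph V} {P Q : Set (V × V)} {B : Set V}

theorem closureSet_anti (h : P ⊆ Q) : closureSet G Q B ⊆ closureSet G P B := by
  intro v hv
  induction hv with
  | init hvB => exact .init hvB
  | force hadj huv _ _ ihu ihw => exact .force hadj (fun huvP => huv (h huvP)) ihu ihw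

theorem closureSet_inter_fst_preimage_closureSet :
    closureSet G (P ∩ Prod.fst ⁻¹' closureSet G P B) B = closureSet G P B := by
  refine Set.Subset.antisymm (fun v hv => ?_) (closureSet_anti Set.inter_subset_left)
  induction hv with
  | init hvB => exact .init hvB
  | force hadj huv _ _ ihu ihw => exact .force hadj (fun huvP => huv ⟨huvP, ihu⟩) ihu ihw

theorem closureSet_vertexLeaks_inter_closureSet (L : Set V) :
    closureSet G (vertexLeaks (L ∩ closureSet G (vertexLeaks L) B)) B =
      closureSet G (vertexLeaks L) B :=
  closureSet_inter_fst_preimage_closureSet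

theorem IsLeakyForcingSet.closureSet_eq_univ {m : ℕ} (hB : IsLeakyForcingSet G m B) {L : Set V}
    (hL : L.encard ≤ m) : closureSet G (vertexLeaks L) B = Set.univ := by
  lift L to Finset V using Set.finite_of_encard_le_coe hL
  rw [Set.encard_coe_eq_coe_finsetCard, Nat.cast_le] at hL
  exact hB L hL

theorem IsLeakyForcingSet.lt_encard_inter_closureSet {m : ℕ} (hB : IsLeakyForcingSet G m B)
    {L : Set V} (hL : m < L.encard) : m < (L ∩ closureSet G (vertexLeaks L) B).encard := by
  by_contra! hblue
  have huniv : closureSet G (vertexLeaks L) B = Set.univ := by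
    rw [← closureSet_vertexLeaks_inter_closureSet]
    exact hB.closureSet_eq_univ hblue
  rw [huniv, Set.inter_univ] at hblue
  exact hL.not_ge hblue

theorem statement1_general {m : ℕ} (hB : IsLeakyForcingSet G m B) {L : Finset V}
    (hL : m < L.card) :
    ((L : Set V) \ closureSet G (vertexLeaks ↑L) B).ncard + m < L.card := by
  have hblue : m < ((L : Set V) ∩ closureSet G (vertexLeaks ↑L) B).ncard := by
    rw [← Nat.cast_lt (α := ℕ∞), (L.finite_toSet.inter_of_left _).cast_ncard_eq]
    exact hB.lt_encard_inter_closureSet (by simpa using hL)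
  calc
    _ < ((L : Set V) \ closureSet G (vertexLeaks ↑L) B).ncard +
        ((L : Set V) ∩ closureSet G (vertexLeaks ↑L) B).ncard := Nat.add_lt_add_left hblue _
    _ = L.card := by
      rw [add_comm, Set.ncard_inter_add_ncard_sdiff_eq_ncard _ _ L.finite_toSet,
        Set.ncard_coe_finset]

end

/-- Lemma `fail`: if `B` is an `(ℓ-1)`-leaky forcing set and
`L` is a set of `k ≥ ℓ` vertex leaks, then `|L \ B^[∞]_L| ≤ k - ℓ`. -/
theorem statement1 [Fintype V] [DecidableEq V] (G : SimpleGraph V) (ℓ k : ℕ)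
    (hℓ : 1 ≤ ℓ) (B : Set V) (hB : IsLeakyForcingSet G (ℓ - 1) B)
    (L : Finset V) (hcard : L.card = k) (hk : ℓ ≤ k) :
    ((L : Set V) \ closureSet G (vertexLeaks ↑L) B).ncard ≤ k - ℓ := by
  have hwhite := statement1_general hB (show ℓ - 1 < L.card by omega)
  omega
end

section
/- Let G be a finite simple graph and ℓ ≥ 1. A set B ⊆ V(G) is an ℓ-leaky forcing set if and only if B is an (ℓ−1)-leaky forcing set such that for every set L of ℓ−1 vertex leaks and every vertex v ∈ V(G) \ B, there exist two distinct vertices x ≠ y with x→v ∈ ℱ_L(B) and y→v ∈ ℱ_L(B). -/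
/-!
Zero forcing with leaks (vertex leaks, edge leaks, specified leaks, mixed leaks).

A force `u → v` is modelled as the ordered pair `(u, v) : V × V`.  All the
leak notions are encoded by a set `P` of *prohibited* forces.
-/

variable {V : Type*}

/-!
Suppose `B` is forcing despite the prohibited forces `P`, but making `x` a leak as well stalls the
process at a proper blue set `C`. Then `x` is the only vertex that can force out of `C` under `P`,
and it can do so onto a single white neighbor `v`. Every forcing process avoiding `P` must leave `C`
somewhere, hence contains `x → v`, and as it forces `v` only once it contains no other `y → v`. So a
vertex with two potential forcers is exactly what an additional leak cannot defeat.
-/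

section

variable {G : SimpleGraph V} {P Q : Set (V × V)} {B C : Set V} {F : Set (V × V)} {v x : V}

theorem Forced.mono (hQP : Q ⊆ P) (hBC : B ⊆ C) (h : Forced G P B v) : Forced G Q C v := by
  induction h with
  | init hv => exact .init (hBC hv)
  | force hadj hP _ _ ihu ihw => exact .force hadj (fun hQ ↦ hP (hQP hQ)) ihu ihw

theorem subset_closureSet : B ⊆ closureSet G P B :=
  fun _ ↦ .init

theorem closureSet_mono (hQP : Q ⊆ P) (hBC : B ⊆ C) : closureSet G P B ⊆ closureSet G Q C :=
  fun _ ↦ .mono hQP hBC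

theorem not_canForce_closureSet (u v : V) : ¬ CanForce G P (closureSet G P B) u v :=
  fun ⟨hu, hv, hadj, hall, hP⟩ ↦ hv (.force hadj hP hu hall)

theorem closureSet_subset_self (h : ∀ u v, ¬ CanForce G P B u v) : closureSet G P B ⊆ B := by
  intro v hv
  induction hv with
  | init hv => exact hv
  | @force u v hadj hP _ _ ihu ihw =>
    by_contra hvB
    exact h u v ⟨ihu, hvB, hadj, ihw, hP⟩

theorem exists_canForce_of_closureSet_eq_univ (h : closureSet G P B = Set.univ) (hBC : B ⊆ C)
    (hC : C ≠ Set.univ) : ∃ u v, CanForce G P C u v := by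
  by_contra! hstall
  have hsub : closureSet G P B ⊆ C :=
    (closureSet_mono subset_rfl hBC).trans (closureSet_subset_self hstall)
  exact hC (Set.univ_subset_iff.mp (h ▸ hsub))

namespace CanForce

theorem anti {u : V} (hQP : Q ⊆ P) : CanForce G P B u v → CanForce G Q B u v :=
  fun ⟨hu, hv, hadj, hall, hP⟩ ↦ ⟨hu, hv, hadj, hall, fun hQ ↦ hP (hQP hQ)⟩

theorem mono_s2 {u : V} (hBC : B ⊆ C) (hv : v ∉ C) : CanForce G P B u v → CanForce G P C u v :=
  fun ⟨hu, _, hadj, hall, hP⟩ ↦ ⟨hBC hu, hv, hadj, fun w hw hne ↦ hBC (hall w hw hne), hP⟩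

theorem target_unique {u w : V} (hv : CanForce G P B u v) (hw : CanForce G P B u w) : v = w := by
  obtain ⟨-, -, -, hall, -⟩ := hv
  obtain ⟨-, hwB, hadj, -, -⟩ := hw
  by_contra hne
  exact hwB (hall w hadj (Ne.symm hne))

theorem eq_of_not_canForce_union_vertexLeaks {u : V} (h : CanForce G P C u v)
    (hx : ¬ CanForce G (P ∪ vertexLeaks {x}) C u v) : u = x := by
  obtain ⟨hu, hv, hadj, hall, hP⟩ := h
  by_contra hux
  exact hx ⟨hu, hv, hadj, hall, not_or_intro hP hux⟩

end CanForce

namespace ValidList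

variable {l : List (V × V)} {f g : V × V}

theorem anti (hQP : Q ⊆ P) (h : ValidList G P B l) : ValidList G Q B l := by
  induction l generalizing B with
  | nil => trivial
  | cons _ _ ih => exact ⟨h.1.anti hQP, ih h.2⟩

theorem target_notMem (h : ValidList G P B l) (hf : f ∈ l) : f.2 ∉ B := by
  induction l generalizing B with
  | nil => exact absurd hf List.not_mem_nil
  | cons k l ih =>
    rcases List.mem_cons.mp hf with rfl | hf
    · exact h.1.2.1
    · exact fun hB ↦ ih h.2 hf (Set.mem_insert_of_mem _ hB)

theorem notMem_prohibited (h : ValidList G P B l) (hf : f ∈ l) : f ∉ P := by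
  induction l generalizing B with
  | nil => exact absurd hf List.not_mem_nil
  | cons k l ih =>
    rcases List.mem_cons.mp hf with rfl | hf
    · exact h.1.2.2.2.2
    · exact ih h.2 hf

theorem eq_of_target_eq (h : ValidList G P B l) (hf : f ∈ l) (hg : g ∈ l) (hfg : f.2 = g.2) :
    f = g := by
  induction l generalizing B with
  | nil => exact absurd hf List.not_mem_nil
  | cons k l ih =>
    have target_ne {k' : V × V} (hk' : k' ∈ l) : k'.2 ≠ k.2 :=
      fun heq ↦ h.2.target_notMem hk' (heq ▸ Set.mem_insert _ _)
    rcases List.mem_cons.mp hf with rfl | hfl <;> rcases List.mem_cons.mp hg with rfl | hgl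
    · rfl
    · exact absurd hfg.symm (target_ne hgl)
    · exact absurd hfg (target_ne hfl)
    · exact ih h.2 hfl hgl

theorem exists_canForce (h : ValidList G P B l) (hBC : B ⊆ C) (hC : ∃ f ∈ l, f.2 ∉ C) :
    ∃ f ∈ l, CanForce G P C f.1 f.2 := by
  induction l generalizing B with
  | nil => simp at hC
  | cons k l ih =>
    by_cases hk : k.2 ∈ C
    · have htail : ∃ f ∈ l, f.2 ∉ C := by simpa [hk] using hC
      obtain ⟨f, hf, hforce⟩ := ih h.2 (Set.insert_subset hk hBC) htail
      exact ⟨f, List.mem_cons_of_mem _ hf, hforce⟩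
    · exact ⟨k, List.mem_cons_self, h.1.mono_s2 hBC hk⟩

end ValidList

namespace IsForcingProcess

theorem anti (hQP : Q ⊆ P) : IsForcingProcess G P B F → IsForcingProcess G Q B F :=
  fun ⟨l, hlF, hl, huniv⟩ ↦ ⟨l, hlF, hl.anti hQP, huniv⟩

theorem notMem_prohibited {f : V × V} (h : IsForcingProcess G P B F) (hf : f ∈ F) : f ∉ P := by
  obtain ⟨l, rfl, hl, -⟩ := h
  exact hl.notMem_prohibited hf

theorem source_unique {u w : V} (h : IsForcingProcess G P B F) (hu : (u, v) ∈ F)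
    (hw : (w, v) ∈ F) : u = w := by
  obtain ⟨l, rfl, hl, -⟩ := h
  exact congrArg Prod.fst (hl.eq_of_target_eq hu hw rfl)

theorem exists_source (h : IsForcingProcess G P B F) (hv : v ∉ B) : ∃ u, (u, v) ∈ F := by
  obtain ⟨l, -, -, huniv⟩ := h
  obtain ⟨f, hf, rfl⟩ := (Set.eq_univ_iff_forall.mp huniv v).resolve_left hv
  exact ⟨f.1, hf⟩

theorem exists_canForce (h : IsForcingProcess G P B F) (hBC : B ⊆ C) (hC : C ≠ Set.univ) :
    ∃ u v, (u, v) ∈ F ∧ CanForce G P C u v := by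
  obtain ⟨w, hw⟩ := (Set.ne_univ_iff_exists_notMem C).mp hC
  obtain ⟨u, hu⟩ := h.exists_source (Set.notMem_subset hBC hw)
  obtain ⟨l, rfl, hl, -⟩ := h
  obtain ⟨f, hf, hforce⟩ := hl.exists_canForce hBC ⟨(u, w), hu, hw⟩
  exact ⟨f.1, f.2, hf, hforce⟩

theorem empty : IsForcingProcess G P Set.univ ∅ :=
  ⟨[], by simp, trivial, Set.univ_union _⟩

theorem insert_of_canForce {u : V} (huv : CanForce G P B u v)
    (h : IsForcingProcess G P (insert v B) F) : IsForcingProcess G P B (insert (u, v) F) := by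
  obtain ⟨l, rfl, hl, huniv⟩ := h
  refine ⟨(u, v) :: l, by ext; simp, ⟨huv, hl⟩, ?_⟩
  rwa [Set.image_insert_eq, Set.union_insert, ← Set.insert_union]

end IsForcingProcess

theorem exists_isForcingProcess {B : Set V} (hB : Bᶜ.Finite)
    (h : closureSet G P B = Set.univ) : ∃ F, IsForcingProcess G P B F := by
  by_cases hBuniv : B = Set.univ
  · exact ⟨∅, hBuniv ▸ .empty⟩
  obtain ⟨u, v, huv⟩ := exists_canForce_of_closureSet_eq_univ h subset_rfl hBuniv
  have hlt : (insert v B)ᶜ ⊂ Bᶜ := compl_lt_compl_iff_lt.mpr (Set.ssubset_insert huv.2.1)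
  have hclosure : closureSet G P (insert v B) = Set.univ :=
    Set.univ_subset_iff.mp (h ▸ closureSet_mono subset_rfl (Set.subset_insert v B))
  obtain ⟨F, hF⟩ := exists_isForcingProcess (hB.subset hlt.subset) hclosure
  exact ⟨_, hF.insert_of_canForce huv⟩
termination_by Bᶜ.ncard
decreasing_by exact Set.ncard_lt_ncard hlt hB

theorem exists_mem_potentialForces_notMem (hB : Bᶜ.Finite) (hQP : Q ⊆ P)
    (h : closureSet G P B = Set.univ) (hv : v ∉ B) :
    ∃ u, (u, v) ∈ potentialForces G Q B ∧ (u, v) ∉ P := by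
  obtain ⟨F, hF⟩ := exists_isForcingProcess hB h
  obtain ⟨u, hu⟩ := hF.exists_source hv
  exact ⟨u, ⟨F, hF.anti hQP, hu⟩, hF.notMem_prohibited hu⟩

theorem exists_forall_mem_potentialForces_eq (hP : closureSet G P B = Set.univ)
    (hx : closureSet G (P ∪ vertexLeaks {x}) B ≠ Set.univ) :
    ∃ v ∉ B, ∀ u, (u, v) ∈ potentialForces G P B → u = x := by
  set C := closureSet G (P ∪ vertexLeaks {x}) B
  have hBC : B ⊆ C := subset_closureSet
  have source_eq {u v : V} (h : CanForce G P C u v) : u = x :=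
    h.eq_of_not_canForce_union_vertexLeaks (not_canForce_closureSet u v)
  obtain ⟨u, v, huv⟩ := exists_canForce_of_closureSet_eq_univ hP hBC hx
  obtain rfl := source_eq huv
  refine ⟨v, Set.notMem_subset hBC huv.2.1, ?_⟩
  rintro w ⟨F, hF, hwv⟩
  obtain ⟨u', v', hmem, hforce⟩ := hF.exists_canForce hBC hx
  obtain rfl := source_eq hforce
  obtain rfl := hforce.target_unique huv
  exact hF.source_unique hwv hmem

theorem forall_closureSet_union_vertexLeaks_singleton_iff (hB : Bᶜ.Finite) :
    (∀ x, closureSet G (P ∪ vertexLeaks {x}) B = Set.univ) ↔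
      closureSet G P B = Set.univ ∧ ∀ v, v ∉ B → ∃ x y, x ≠ y ∧
        (x, v) ∈ potentialForces G P B ∧ (y, v) ∈ potentialForces G P B := by
  constructor
  · intro h
    have hP : closureSet G P B = Set.univ := Set.eq_univ_iff_forall.mpr fun v ↦
      closureSet_mono Set.subset_union_left subset_rfl (h v ▸ Set.mem_univ v)
    refine ⟨hP, fun v hv ↦ ?_⟩
    obtain ⟨x, hx, -⟩ := exists_mem_potentialForces_notMem hB subset_rfl hP hv
    obtain ⟨y, hy, hyx⟩ :=
      exists_mem_potentialForces_notMem hB Set.subset_union_left (h x) hv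
    have hxy : x ≠ y := fun heq ↦ hyx (Or.inr heq.symm)
    exact ⟨x, y, hxy, hx, hy⟩
  · rintro ⟨hP, htwo⟩ x
    by_contra hx
    obtain ⟨v, hv, honly⟩ := exists_forall_mem_potentialForces_eq hP hx
    obtain ⟨y, z, hyz, hy, hz⟩ := htwo v hv
    exact hyz ((honly y hy).trans (honly z hz).symm)

theorem vertexLeaks_mono {L M : Set V} (h : L ⊆ M) : vertexLeaks L ⊆ vertexLeaks M :=
  fun _ hp ↦ h hp

theorem vertexLeaks_union (L M : Set V) : vertexLeaks (L ∪ M) = vertexLeaks L ∪ vertexLeaks M :=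
  rfl

theorem isLeakyForcingSet_succ_iff {ℓ : ℕ} :
    IsLeakyForcingSet G (ℓ + 1) B ↔ ∀ L : Finset V, L.card ≤ ℓ → ∀ x,
      closureSet G (vertexLeaks ↑L ∪ vertexLeaks {x}) B = Set.univ := by
  classical
  constructor
  · intro h L hL x
    rw [← vertexLeaks_union, Set.union_singleton, ← Finset.coe_insert]
    exact h _ ((Finset.card_insert_le x L).trans (Nat.succ_le_succ hL))
  · intro h L hL
    refine Set.eq_univ_iff_forall.mpr fun v ↦ ?_
    obtain ⟨M, x, hM, hLM⟩ : ∃ (M : Finset V) (x : V), M.card ≤ ℓ ∧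
        (L : Set V) ⊆ ↑M ∪ {x} := by
      rcases L.eq_empty_or_nonempty with rfl | ⟨x, hx⟩
      · exact ⟨∅, v, by simp⟩
      · refine ⟨L.erase x, x, ?_, ?_⟩
        · rw [Finset.card_erase_of_mem hx]
          exact Nat.sub_le_of_le_add hL
        · rw [Set.union_singleton, ← Finset.coe_insert, Finset.insert_erase hx]
    exact closureSet_mono (vertexLeaks_mono hLM) subset_rfl (h M hM x ▸ Set.mem_univ v)

end

theorem statement2_general (G : SimpleGraph V) (ℓ : ℕ) {B : Set V} (hB : Bᶜ.Finite) :
    IsLeakyForcingSet G (ℓ + 1) B ↔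
      (IsLeakyForcingSet G ℓ B ∧
        ∀ L : Finset V, L.card ≤ ℓ → ∀ v : V, v ∉ B →
          ∃ x y : V, x ≠ y ∧ (x, v) ∈ potentialForces G (vertexLeaks ↑L) B ∧
            (y, v) ∈ potentialForces G (vertexLeaks ↑L) B) := by
  rw [isLeakyForcingSet_succ_iff]
  simp only [forall_closureSet_union_vertexLeaks_singleton_iff hB, IsLeakyForcingSet, imp_and,
    forall_and]

/-- Theorem `setofforces`: `B` is an `ℓ`-leaky forcing set iff
`B` is an `(ℓ-1)`-leaky forcing set such that for every set `L` of `ℓ-1` vertex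
leaks and every `v ∈ V(G) \ B` there are two distinct forces `x→v, y→v ∈ ℱ_L(B)`. -/
theorem statement2 [Fintype V] [DecidableEq V] (G : SimpleGraph V) (ℓ : ℕ)
    (hℓ : 1 ≤ ℓ) (B : Set V) :
    IsLeakyForcingSet G ℓ B ↔
      (IsLeakyForcingSet G (ℓ - 1) B ∧
        ∀ L : Finset V, L.card ≤ ℓ - 1 → ∀ v : V, v ∉ B →
          ∃ x y : V, x ≠ y ∧ (x, v) ∈ potentialForces G (vertexLeaks ↑L) B ∧
            (y, v) ∈ potentialForces G (vertexLeaks ↑L) B) := by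
  obtain ⟨k, rfl⟩ := Nat.exists_eq_add_of_le' hℓ
  exact statement2_general G k (Set.toFinite Bᶜ)
end

section
/- Let G be a finite simple graph, ℓ ≥ 1, and let B be an (ℓ−1)-edge-leaky forcing set of G. If L is a set of k ≥ ℓ edge leaks, then |L − B^[∞]_L| ≤ k − ℓ, where L − S = {xy ∈ L : x ∉ S and y ∉ S}; that is, at most k − ℓ of the leaked edges have both endpoints white after exhaustively applying the zero forcing rule with edge leaks L starting from B. -/
/-!
Zero forcing with leaks (vertex leaks, edge leaks, specified leaks, mixed leaks).

A force `u → v` is modelled as the ordered pair `(u, v) : V × V`.  All the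
leak notions are encoded by a set `P` of *prohibited* forces.
-/

variable {V : Type*}

/-!
A force starts at a blue vertex, so a leak whose endpoints both stay white never blocks anything:
deleting all such leaks does not change the set of vertices that end up blue. If at most `ℓ - 1`
leaks remained after the deletion, an `(ℓ - 1)`-edge-leaky forcing set would color the whole graph
blue, and there would have been no such leak in the first place.
-/

section EdgeLeaks

variable {G : SimpleGraph V} {P Q : Set (V × V)} {B : Set V} {L : Set (Sym2 V)} {m : ℕ}

/-- The paper's `L - S`: the edges of `L` with both endpoints outside `S`. -/
def edgesAvoiding (L : Set (Sym2 V)) (S : Set V) : Set (Sym2 V) :=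
  {e ∈ L | ∀ x ∈ e, x ∉ S}

lemma edgesAvoiding_subset (L : Set (Sym2 V)) (S : Set V) : edgesAvoiding L S ⊆ L :=
  Set.sep_subset _ _

lemma edgesAvoiding_univ (L : Set (Sym2 V)) : edgesAvoiding L Set.univ = ∅ :=
  Set.eq_empty_of_forall_notMem fun e he ↦ he.2 _ e.out_fst_mem (Set.mem_univ _)

lemma closureSet_subset_closureSet
    (h : ∀ u ∈ closureSet G Q B, ∀ v, (u, v) ∈ Q → (u, v) ∈ P) :
    closureSet G P B ⊆ closureSet G Q B := by
  intro v hv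
  induction hv with
  | init hvB => exact .init hvB
  | force hadj hP _ _ ihu ihw => exact .force hadj (fun hQ ↦ hP (h _ ihu _ hQ)) ihu ihw

lemma closureSet_edgeLeaksP_sdiff_edgesAvoiding (G : SimpleGraph V) (L : Set (Sym2 V))
    (B : Set V) :
    closureSet G (edgeLeaksP (L \ edgesAvoiding L (closureSet G (edgeLeaksP L) B))) B =
      closureSet G (edgeLeaksP L) B := by
  refine (closureSet_subset_closureSet fun u hu v huv ↦ ?_).antisymm
    (closureSet_subset_closureSet fun _ _ _ huv ↦ huv.1)
  exact ⟨huv, fun hwhite ↦ hwhite.2 u (Sym2.mem_mk_left u v) hu⟩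

namespace IsEdgeLeakyForcingSet

lemma closureSet_eq_univ (hB : IsEdgeLeakyForcingSet G m B) (hL : L ⊆ G.edgeSet)
    (hm : L.encard ≤ m) : closureSet G (edgeLeaksP L) B = Set.univ := by
  lift L to Finset (Sym2 V) using Set.finite_of_encard_le_coe hm
  exact hB L hL (by simpa using hm)

lemma closureSet_eq_univ_of_encard_sdiff_le (hB : IsEdgeLeakyForcingSet G m B)
    (hL : L ⊆ G.edgeSet)
    (hm : (L \ edgesAvoiding L (closureSet G (edgeLeaksP L) B)).encard ≤ m) :
    closureSet G (edgeLeaksP L) B = Set.univ := by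
  rw [← closureSet_edgeLeaksP_sdiff_edgesAvoiding]
  exact hB.closureSet_eq_univ (Set.sdiff_subset.trans hL) hm

end IsEdgeLeakyForcingSet

end EdgeLeaks

theorem statement4_general (G : SimpleGraph V) (m : ℕ) (B : Set V)
    (hB : IsEdgeLeakyForcingSet G m B) (L : Finset (Sym2 V)) (hL : ↑L ⊆ G.edgeSet)
    (hm : m < L.card) :
    (edgesAvoiding ↑L (closureSet G (edgeLeaksP ↑L) B)).ncard + m < L.card := by
  set S := closureSet G (edgeLeaksP ↑L) B
  have hsplit : ((L : Set (Sym2 V)) \ edgesAvoiding L S).ncard + (edgesAvoiding L S).ncard =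
      L.card := by
    rw [Set.ncard_sdiff_add_ncard_of_subset (edgesAvoiding_subset _ _) L.finite_toSet,
      Set.ncard_coe_finset]
  by_cases hfew : ((L : Set (Sym2 V)) \ edgesAvoiding L S).encard ≤ m
  · have hblue : S = Set.univ := hB.closureSet_eq_univ_of_encard_sdiff_le hL hfew
    simpa [hblue, edgesAvoiding_univ] using hm
  · rw [← L.finite_toSet.sdiff.cast_ncard_eq, Nat.cast_le] at hfew
    omega

/-- Lemma `edgefail`: if `B` is an `(ℓ-1)`-edge-leaky forcing
set and `L` is a set of `k ≥ ℓ` edge leaks, then `|L - B^[∞]_L| ≤ k - ℓ`, where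
`L - S` is the set of edges of `L` with both endpoints outside `S`. -/
theorem statement4 [Fintype V] [DecidableEq V] (G : SimpleGraph V) (ℓ k : ℕ)
    (hℓ : 1 ≤ ℓ) (B : Set V) (hB : IsEdgeLeakyForcingSet G (ℓ - 1) B)
    (L : Finset (Sym2 V)) (hLe : ↑L ⊆ G.edgeSet) (hcard : L.card = k) (hk : ℓ ≤ k) :
    {e ∈ (L : Set (Sym2 V)) |
        ∀ x ∈ e, x ∉ closureSet G (edgeLeaksP ↑L) B}.ncard ≤ k - ℓ := by
  subst hcard
  obtain ⟨m, rfl⟩ := Nat.exists_eq_add_of_le' hℓ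
  exact Nat.le_sub_of_add_le (statement4_general G m B hB L hLe hk)
end

section
/- Let G be a finite simple graph, ℓ ≥ 1, and let B be an (ℓ−1)-leaky forcing set of G. If L is a set of k ≥ ℓ specified leaks, then |L − B^[∞]_L| ≤ k − ℓ, where L − S = {x→y ∈ L : x ∉ S}; that is, at most k − ℓ of the specified leaks have a white tail after exhaustively applying the zero forcing rule with specified leaks L starting from B. -/
/-!
Zero forcing with leaks (vertex leaks, edge leaks, specified leaks, mixed leaks).

A force `u → v` is modelled as the ordered pair `(u, v) : V × V`.  All the
leak notions are encoded by a set `P` of *prohibited* forces.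
-/

variable {V : Type*}

/-!
A specified leak only matters once its tail turns blue, so turning the tails of the eventually
blue-tailed leaks into vertex leaks is at least as restrictive. If at most `ℓ` leaks ended up with
a blue tail, an `ℓ`-leaky forcing set would therefore color the whole graph blue despite them, and
then every leak would have a blue tail. Hence more than `ℓ` leaks have a blue tail as soon as
there are more than `ℓ` leaks.
-/

section

variable {G : SimpleGraph V} {B : Set V} {ℓ : ℕ}

theorem closureSet_subset_of_blue_tail_imp {P Q : Set (V × V)}
    (hQP : ∀ u v, (u, v) ∈ Q → u ∈ closureSet G Q B → (u, v) ∈ P) :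
    closureSet G P B ⊆ closureSet G Q B := by
  intro v hv
  induction hv with
  | init hv => exact .init hv
  | force huv hP _ _ hu hnbr => exact .force huv (fun hQ => hP (hQP _ _ hQ hu)) hu hnbr

/-- The specified leaks in `L` that can constrain the process: those whose tail is blue after
exhaustively forcing from `B`. In the notation of the paper, this is `L \ (L - B^[∞]_L)`. -/
def blueTailedLeaks (G : SimpleGraph V) (L : Set (V × V)) (B : Set V) : Set (V × V) :=
  {p ∈ L | p.1 ∈ closureSet G L B}

theorem blueTailedLeaks_eq_self {L : Set (V × V)} (h : closureSet G L B = Set.univ) :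
    blueTailedLeaks G L B = L :=
  Set.sep_eq_self_iff_mem_true.2 fun p _ => h ▸ Set.mem_univ p.1

theorem sdiff_blueTailedLeaks (L : Set (V × V)) :
    L \ blueTailedLeaks G L B = {p ∈ L | p.1 ∉ closureSet G L B} := by
  ext p
  exact and_congr_right fun hp => not_congr (and_iff_right hp)

theorem closureSet_vertexLeaks_tails_subset (L : Set (V × V)) :
    closureSet G (vertexLeaks (Prod.fst '' blueTailedLeaks G L B)) B ⊆ closureSet G L B :=
  closureSet_subset_of_blue_tail_imp fun u v hL hu => ⟨(u, v), ⟨hL, hu⟩, rfl⟩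

namespace IsLeakyForcingSet

theorem closureSet_vertexLeaks_eq_univ (hB : IsLeakyForcingSet G ℓ B) {S : Set V}
    (hS : S.encard ≤ ℓ) : closureSet G (vertexLeaks S) B = Set.univ := by
  lift S to Finset V using Set.finite_of_encard_le_coe hS
  exact hB S (by simpa only [Set.encard_coe_eq_coe_finsetCard, Nat.cast_le] using hS)

theorem closureSet_eq_univ_of_encard_blueTailedLeaks_le (hB : IsLeakyForcingSet G ℓ B)
    {L : Set (V × V)} (hL : (blueTailedLeaks G L B).encard ≤ ℓ) :
    closureSet G L B = Set.univ := by
  have htails : (Prod.fst '' blueTailedLeaks G L B).encard ≤ ℓ :=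
    (Set.encard_image_le _ _).trans hL
  rw [← Set.univ_subset_iff, ← hB.closureSet_vertexLeaks_eq_univ htails]
  exact closureSet_vertexLeaks_tails_subset L

theorem lt_encard_blueTailedLeaks (hB : IsLeakyForcingSet G ℓ B) {L : Set (V × V)}
    (hL : ℓ < L.encard) : ℓ < (blueTailedLeaks G L B).encard := by
  by_contra! hfew
  have hall : blueTailedLeaks G L B = L :=
    blueTailedLeaks_eq_self (hB.closureSet_eq_univ_of_encard_blueTailedLeaks_le hfew)
  exact hL.not_ge (hall ▸ hfew)

end IsLeakyForcingSet

theorem statement9_general (hB : IsLeakyForcingSet G ℓ B) (L : Finset (V × V))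
    (hL : ℓ < L.card) :
    {p ∈ (L : Set (V × V)) | p.1 ∉ closureSet G (↑L) B}.ncard + ℓ < L.card := by
  have hsub : blueTailedLeaks G (↑L) B ⊆ ↑L := Set.sep_subset _ _
  have hblue : ℓ < (blueTailedLeaks G (↑L) B).ncard := by
    have hlt := hB.lt_encard_blueTailedLeaks (L := ↑L)
      (by rwa [Set.encard_coe_eq_coe_finsetCard, Nat.cast_lt])
    rwa [← (L.finite_toSet.subset hsub).cast_ncard_eq, Nat.cast_lt] at hlt
  have hcount := Set.ncard_sdiff_add_ncard_of_subset hsub L.finite_toSet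
  rw [sdiff_blueTailedLeaks, Set.ncard_coe_finset] at hcount
  omega

end

/-- Proposition `specfail`: if `B` is an `(ℓ-1)`-leaky forcing
set and `L` is a set of `k ≥ ℓ` specified leaks, then `|L - B^[∞]_L| ≤ k - ℓ`,
where `L - S = {x→y ∈ L : x ∉ S}`. -/
theorem statement9 [Fintype V] [DecidableEq V] (G : SimpleGraph V) (ℓ k : ℕ)
    (hℓ : 1 ≤ ℓ) (B : Set V) (hB : IsLeakyForcingSet G (ℓ - 1) B)
    (L : Finset (V × V)) (hadj : ∀ p ∈ L, G.Adj p.1 p.2)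
    (hcard : L.card = k) (hk : ℓ ≤ k) :
    {p ∈ (L : Set (V × V)) |
        p.1 ∉ closureSet G (↑L) B}.ncard ≤ k - ℓ := by
  have hlt := statement9_general hB L (by omega)
  omega
end
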